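/- arXiv:1406.2446 — 2 statements merged into one kernel-verified Lean document; each statement's English description precedes it below -/
import Mathlib

section
/- For every u ∈ ℝ^d the operator norm of h(u) equals g(|u|), and in particular ‖h(u)‖ ≤ |u|. Moreover h is globally Lipschitz with constant 3 with respect to the operator norm: ‖h(u) − h(v)‖ ≤ 3|u − v| for all u, v ∈ ℝ^d. -/
/-! Write `a(u) = dp / (dp |u| + dr)`, so that `h(u) = a(u) u⊗u`. The norm formula is
`‖u⊗u‖ = |u|²`, and `a(u)|u| ≤ 1` turns it into `‖h(u)‖ ≤ |u|`. For the Lipschitz bound one may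
take `|v| ≤ |u|` by symmetry, and splits
`h(u) - h(v) = a(u) (u⊗u - v⊗v) + (a(u) - a(v)) v⊗v`.
The first term is at most `a(u)(|u| + |v|)|u - v| ≤ 2|u - v|`. The second is at most `|u - v|`
because `a(u) - a(v) = a(u) a(v) (|v| - |u|)` and `a(u)|v| ≤ a(u)|u| ≤ 1`, `a(v)|v| ≤ 1`. -/

open scoped RealInnerProductSpace

/-- `g(s) = d_p s² / (d_p s + d_r)`, the factor `F(Pe)|u|` with `Pe = d_p s`. -/
noncomputable def gfun (dp dr s : ℝ) : ℝ := dp * s ^ 2 / (dp * s + dr)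

/-- The rank-one matrix `u ⊗ u`, acting as `ξ ↦ ⟨u, ξ⟩ u`. -/
noncomputable def outerProd {d : ℕ} (u : EuclideanSpace ℝ (Fin d)) :
    EuclideanSpace ℝ (Fin d) →L[ℝ] EuclideanSpace ℝ (Fin d) :=
  (innerSL ℝ u).smulRight u

/-- `h(u) = d_p (u ⊗ u) / (d_p |u| + d_r)`, the anisotropic (velocity-dependent)
part of the diffusion–dispersion tensor; `h(0) = 0` and `h(u) = g(|u|)(u⊗u)/|u|²`
for `u ≠ 0`. -/
noncomputable def hmat {d : ℕ} (dp dr : ℝ) (u : EuclideanSpace ℝ (Fin d)) :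
    EuclideanSpace ℝ (Fin d) →L[ℝ] EuclideanSpace ℝ (Fin d) :=
  (dp / (dp * ‖u‖ + dr)) • outerProd u

lemma norm_outerProd {d : ℕ} (u : EuclideanSpace ℝ (Fin d)) : ‖outerProd u‖ = ‖u‖ ^ 2 := by
  rw [outerProd, ContinuousLinearMap.norm_smulRight_apply, innerSL_apply_norm, sq]

lemma norm_outerProd_sub_le {d : ℕ} (u v : EuclideanSpace ℝ (Fin d)) :
    ‖outerProd u - outerProd v‖ ≤ (‖u‖ + ‖v‖) * ‖u - v‖ := by
  have h : outerProd u - outerProd v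
      = (innerSL ℝ (u - v)).smulRight u + (innerSL ℝ v).smulRight (u - v) := by
    ext1 x
    simp only [outerProd, sub_apply, add_apply,
      ContinuousLinearMap.smulRight_apply, innerSL_apply_apply, inner_sub_left]
    module
  rw [h]
  refine (norm_add_le _ _).trans_eq ?_
  rw [ContinuousLinearMap.norm_smulRight_apply, ContinuousLinearMap.norm_smulRight_apply,
    innerSL_apply_norm, innerSL_apply_norm]
  ring

lemma coeff_mul_le_one {dp dr s : ℝ} (hdp : 0 < dp) (hdr : 0 < dr) (hs : 0 ≤ s) :
    dp / (dp * s + dr) * s ≤ 1 := by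
  rw [div_mul_eq_mul_div, div_le_one (by positivity)]
  linarith

lemma norm_hmat {d : ℕ} {dp dr : ℝ} (hdp : 0 < dp) (hdr : 0 < dr)
    (u : EuclideanSpace ℝ (Fin d)) : ‖hmat dp dr u‖ = gfun dp dr ‖u‖ := by
  rw [hmat, norm_smul, norm_outerProd, Real.norm_of_nonneg (by positivity), gfun,
    div_mul_eq_mul_div]

lemma norm_hmat_sub_le_of_norm_le {d : ℕ} {dp dr : ℝ} (hdp : 0 < dp) (hdr : 0 < dr)
    {u v : EuclideanSpace ℝ (Fin d)} (huv : ‖v‖ ≤ ‖u‖) :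
    ‖hmat dp dr u - hmat dp dr v‖ ≤ 3 * ‖u - v‖ := by
  have hu1 := coeff_mul_le_one hdp hdr (norm_nonneg u)
  have hv1 := coeff_mul_le_one hdp hdr (norm_nonneg v)
  have hab : dp / (dp * ‖u‖ + dr) - dp / (dp * ‖v‖ + dr)
      = dp / (dp * ‖u‖ + dr) * (dp / (dp * ‖v‖ + dr)) * (‖v‖ - ‖u‖) := by
    have h1 : dp * ‖u‖ + dr ≠ 0 := by positivity
    have h2 : dp * ‖v‖ + dr ≠ 0 := by positivity
    field_simp
    ring
  have ha : 0 ≤ dp / (dp * ‖u‖ + dr) := by positivity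
  have hb : 0 ≤ dp / (dp * ‖v‖ + dr) := by positivity
  unfold hmat
  set a := dp / (dp * ‖u‖ + dr)
  set b := dp / (dp * ‖v‖ + dr)
  have hav : a * ‖v‖ ≤ 1 := (mul_le_mul_of_nonneg_left huv ha).trans hu1
  have hsplit : a • outerProd u - b • outerProd v
      = a • (outerProd u - outerProd v) + (a - b) • outerProd v := by module
  have hfirst : ‖a • (outerProd u - outerProd v)‖ ≤ 2 * ‖u - v‖ := by
    rw [norm_smul, Real.norm_of_nonneg ha]
    calc a * ‖outerProd u - outerProd v‖ ≤ a * ((‖u‖ + ‖v‖) * ‖u - v‖) := by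
          gcongr
          exact norm_outerProd_sub_le u v
      _ = (a * ‖u‖ + a * ‖v‖) * ‖u - v‖ := by ring
      _ ≤ 2 * ‖u - v‖ := by
          gcongr
          linarith
  have hsecond : ‖(a - b) • outerProd v‖ ≤ ‖u - v‖ := by
    rw [norm_smul, norm_outerProd, hab, norm_mul, Real.norm_of_nonneg (mul_nonneg ha hb),
      Real.norm_eq_abs]
    calc a * b * |‖v‖ - ‖u‖| * ‖v‖ ^ 2 = (a * ‖v‖) * (b * ‖v‖) * |‖v‖ - ‖u‖| := by ring
      _ ≤ 1 * 1 * ‖u - v‖ := by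
          gcongr
          rw [norm_sub_rev]
          exact abs_norm_sub_norm_le v u
      _ = ‖u - v‖ := by ring
  rw [hsplit]
  linarith [norm_add_le (a • (outerProd u - outerProd v)) ((a - b) • outerProd v)]

theorem hmat_norm_and_lipschitz {d : ℕ} (hd : 1 ≤ d) (dp dr : ℝ)
    (hdp : 0 < dp) (hdr : 0 < dr) :
    (∀ u : EuclideanSpace ℝ (Fin d), ‖hmat dp dr u‖ = gfun dp dr ‖u‖) ∧
    (∀ u : EuclideanSpace ℝ (Fin d), ‖hmat dp dr u‖ ≤ ‖u‖) ∧
    (∀ u v : EuclideanSpace ℝ (Fin d), ‖hmat dp dr u - hmat dp dr v‖ ≤ 3 * ‖u - v‖) := by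
  refine ⟨norm_hmat hdp hdr, fun u => ?_, fun u v => ?_⟩
  · rw [norm_hmat hdp hdr, gfun]
    calc dp * ‖u‖ ^ 2 / (dp * ‖u‖ + dr) = dp / (dp * ‖u‖ + dr) * ‖u‖ * ‖u‖ := by ring
      _ ≤ 1 * ‖u‖ := by
          gcongr
          exact coeff_mul_le_one hdp hdr (norm_nonneg u)
      _ = ‖u‖ := one_mul _
  · rcases le_total ‖v‖ ‖u‖ with h | h
    · exact norm_hmat_sub_le_of_norm_le hdp hdr h
    · rw [norm_sub_rev, norm_sub_rev u v]
      exact norm_hmat_sub_le_of_norm_le hdp hdr h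
end

section
/- Assume Φ₀ > 0 and 0 < φ ≤ Φ₀. Then the map u ↦ D(u) is globally Lipschitz with explicit constant: for all u, v ∈ ℝ^d, ‖D(u) − D(v)‖ ≤ Φ₀(α₁ + 3|α₂ − α₁|)|u − v|, where ‖·‖ denotes the operator norm of d×d matrices. -/
/-!
Write `k s = dp / (dp * s + dr)`, so that `g(s) / s² = k s` away from `0`. Then
`D(u) = φ [(d₀ + α₁ g(|u|)) I + (α₂ - α₁) k(|u|) u⊗u]` for every `u`, with no singularity at `0`.
The scalar part is controlled because `g` is `1`-Lipschitz on `[0, ∞)`. For the rank-one part, the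
splitting
`k(s) u⊗u - k(t) v⊗v = k(s) (u-v)⊗u + k(t) v⊗(u-v) + (k(s) - k(t)) v⊗u`, with `s = |u|`, `t = |v|`
and `a⊗b` acting as `ξ ↦ ⟨b, ξ⟩ a`, has three terms, each of norm at most `|u - v|`, since
`k(s) s ≤ 1`, `k(t) t ≤ 1` and `|k(s) - k(t)| s t ≤ |s - t|`.
-/

open scoped RealInnerProductSpace

/-- The diffusion–dispersion matrix
`D(u) = φ[d₀ I + F(Pe)|u| (α₁ I + (α₂ - α₁) (u⊗u)/|u|²)]`;
for `u = 0` the formula gives `φ d₀ I` since `g(0) = 0` (and `outerProd 0 = 0`). -/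
noncomputable def Dmat {d : ℕ} (d0 α1 α2 dp dr φ : ℝ) (u : EuclideanSpace ℝ (Fin d)) :
    EuclideanSpace ℝ (Fin d) →L[ℝ] EuclideanSpace ℝ (Fin d) :=
  φ • (d0 • ContinuousLinearMap.id ℝ (EuclideanSpace ℝ (Fin d)) +
    gfun dp dr ‖u‖ • (α1 • ContinuousLinearMap.id ℝ (EuclideanSpace ℝ (Fin d)) +
      ((α2 - α1) / ‖u‖ ^ 2) • outerProd u))

/-- The regularized quotient `g(s) / s² = dp / (dp * s + dr)`, which is also finite at `s = 0`. -/
noncomputable def kfun (dp dr s : ℝ) : ℝ := dp / (dp * s + dr)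

section Scalar

variable {dp dr s t : ℝ}

lemma kfun_pos (hdp : 0 < dp) (hdr : 0 < dr) (hs : 0 ≤ s) : 0 < kfun dp dr s := by
  unfold kfun; positivity

lemma kfun_mul_le_one (hdp : 0 < dp) (hdr : 0 < dr) (hs : 0 ≤ s) : kfun dp dr s * s ≤ 1 := by
  have h : 0 < dp * s + dr := by positivity
  unfold kfun
  rw [div_mul_eq_mul_div, div_le_one h]
  linarith

/-- Holds because `(k(s) - k(t)) s t = (k(s) s) (k(t) t) (t - s)`. -/
lemma abs_kfun_sub_mul_le (hdp : 0 < dp) (hdr : 0 < dr) (hs : 0 ≤ s) (ht : 0 ≤ t) :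
    |kfun dp dr s - kfun dp dr t| * s * t ≤ |s - t| := by
  have h1 : 0 < dp * s + dr := by positivity
  have h2 : 0 < dp * t + dr := by positivity
  have e : kfun dp dr s - kfun dp dr t = kfun dp dr s * kfun dp dr t * (t - s) := by
    unfold kfun; field_simp; ring
  have ks := kfun_pos hdp hdr hs
  have kt := kfun_pos hdp hdr ht
  rw [e, abs_mul, abs_of_pos (mul_pos ks kt), abs_sub_comm t s]
  calc kfun dp dr s * kfun dp dr t * |s - t| * s * t
      = (kfun dp dr s * s) * (kfun dp dr t * t) * |s - t| := by ring
    _ ≤ 1 * 1 * |s - t| := by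
        gcongr
        · exact kfun_mul_le_one hdp hdr hs
        · exact kfun_mul_le_one hdp hdr ht
    _ = |s - t| := by ring

lemma abs_gfun_sub_le (hdp : 0 < dp) (hdr : 0 < dr) (hs : 0 ≤ s) (ht : 0 ≤ t) :
    |gfun dp dr s - gfun dp dr t| ≤ |s - t| := by
  have h1 : 0 < dp * s + dr := by positivity
  have h2 : 0 < dp * t + dr := by positivity
  -- Writing `g(s) = s - dr / dp + (dr² / dp) / (dp s + dr)`, the difference quotient is
  -- `1 - dr² / ((dp s + dr) (dp t + dr))`, which lies in `[0, 1]`.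
  have e : gfun dp dr s - gfun dp dr t =
      (1 - dr ^ 2 / ((dp * s + dr) * (dp * t + dr))) * (s - t) := by
    unfold gfun; field_simp; ring
  have hq : dr ^ 2 / ((dp * s + dr) * (dp * t + dr)) ≤ 1 := by
    rw [div_le_one (by positivity), sq]
    have := mul_nonneg hdp.le hs
    have := mul_nonneg hdp.le ht
    gcongr <;> linarith
  have hq0 : 0 ≤ dr ^ 2 / ((dp * s + dr) * (dp * t + dr)) := by positivity
  rw [e, abs_mul, abs_of_nonneg (by linarith)]
  exact mul_le_of_le_one_left (abs_nonneg _) (by linarith)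

end Scalar

/-- The formula for `D(u)` with the singularity at `u = 0` removed. -/
lemma Dmat_eq {d : ℕ} (d0 α1 α2 dp dr φ : ℝ) (u : EuclideanSpace ℝ (Fin d)) :
    Dmat d0 α1 α2 dp dr φ u =
      φ • ((d0 + α1 * gfun dp dr ‖u‖) • ContinuousLinearMap.id ℝ (EuclideanSpace ℝ (Fin d)) +
        (α2 - α1) • kfun dp dr ‖u‖ • outerProd u) := by
  have h : (gfun dp dr ‖u‖ * ((α2 - α1) / ‖u‖ ^ 2)) • outerProd u =
      ((α2 - α1) * kfun dp dr ‖u‖) • outerProd u := by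
    rcases eq_or_ne u 0 with rfl | hu
    · ext
      simp [outerProd]
    · have hu' : ‖u‖ ≠ 0 := norm_ne_zero_iff.mpr hu
      congr 1
      unfold gfun kfun
      field_simp
  unfold Dmat
  rw [smul_add (gfun dp dr ‖u‖), smul_smul _ (_ / _), h]
  module

lemma norm_kfun_smul_outerProd_sub_le {d : ℕ} {dp dr : ℝ} (hdp : 0 < dp) (hdr : 0 < dr)
    (u v : EuclideanSpace ℝ (Fin d)) :
    ‖kfun dp dr ‖u‖ • outerProd u - kfun dp dr ‖v‖ • outerProd v‖ ≤ 3 * ‖u - v‖ := by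
  refine ContinuousLinearMap.opNorm_le_bound _ (by positivity) fun ξ => ?_
  have ks := kfun_pos hdp hdr (norm_nonneg u)
  have kt := kfun_pos hdp hdr (norm_nonneg v)
  have e : (kfun dp dr ‖u‖ • outerProd u - kfun dp dr ‖v‖ • outerProd v) ξ =
      (kfun dp dr ‖u‖ * ⟪u, ξ⟫) • (u - v) + (kfun dp dr ‖v‖ * ⟪u - v, ξ⟫) • v +
        ((kfun dp dr ‖u‖ - kfun dp dr ‖v‖) * ⟪u, ξ⟫) • v := by
    simp only [outerProd, sub_apply, smul_apply,
      ContinuousLinearMap.smulRight_apply, innerSL_apply_apply, inner_sub_left]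
    module
  have h1 : ‖(kfun dp dr ‖u‖ * ⟪u, ξ⟫) • (u - v)‖ ≤ ‖u - v‖ * ‖ξ‖ := by
    rw [norm_smul, norm_mul, Real.norm_of_nonneg ks.le]
    calc _ ≤ kfun dp dr ‖u‖ * (‖u‖ * ‖ξ‖) * ‖u - v‖ := by
          gcongr; exact norm_inner_le_norm u ξ
      _ = (kfun dp dr ‖u‖ * ‖u‖) * (‖u - v‖ * ‖ξ‖) := by ring
      _ ≤ _ := mul_le_of_le_one_left (by positivity) (kfun_mul_le_one hdp hdr (norm_nonneg u))
  have h2 : ‖(kfun dp dr ‖v‖ * ⟪u - v, ξ⟫) • v‖ ≤ ‖u - v‖ * ‖ξ‖ := by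
    rw [norm_smul, norm_mul, Real.norm_of_nonneg kt.le]
    calc _ ≤ kfun dp dr ‖v‖ * (‖u - v‖ * ‖ξ‖) * ‖v‖ := by
          gcongr; exact norm_inner_le_norm (u - v) ξ
      _ = (kfun dp dr ‖v‖ * ‖v‖) * (‖u - v‖ * ‖ξ‖) := by ring
      _ ≤ _ := mul_le_of_le_one_left (by positivity) (kfun_mul_le_one hdp hdr (norm_nonneg v))
  have h3 : ‖((kfun dp dr ‖u‖ - kfun dp dr ‖v‖) * ⟪u, ξ⟫) • v‖ ≤ ‖u - v‖ * ‖ξ‖ := by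
    rw [norm_smul, norm_mul, Real.norm_eq_abs (kfun dp dr ‖u‖ - kfun dp dr ‖v‖)]
    calc _ ≤ |kfun dp dr ‖u‖ - kfun dp dr ‖v‖| * (‖u‖ * ‖ξ‖) * ‖v‖ := by
          gcongr; exact norm_inner_le_norm u ξ
      _ = |kfun dp dr ‖u‖ - kfun dp dr ‖v‖| * ‖u‖ * ‖v‖ * ‖ξ‖ := by ring
      _ ≤ |‖u‖ - ‖v‖| * ‖ξ‖ := by
          gcongr; exact abs_kfun_sub_mul_le hdp hdr (norm_nonneg u) (norm_nonneg v)
      _ ≤ _ := by gcongr; exact abs_norm_sub_norm_le u v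
  rw [e]
  refine norm_add₃_le.trans ?_
  linarith

theorem Dmat_lipschitz {d : ℕ} (hd : 1 ≤ d)
    (d0 α1 α2 dp dr φ : ℝ)
    (hd0 : 0 < d0) (hα1 : 0 < α1) (hα2 : 0 < α2) (hdp : 0 < dp) (hdr : 0 < dr)
    (hφ : 0 < φ) (Φ0 : ℝ) (hΦ0 : 0 < Φ0) (hφu : φ ≤ Φ0) :
    ∀ u v : EuclideanSpace ℝ (Fin d),
      ‖Dmat d0 α1 α2 dp dr φ u - Dmat d0 α1 α2 dp dr φ v‖ ≤
        Φ0 * (α1 + 3 * |α2 - α1|) * ‖u - v‖ := by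
  intro u v
  have e : Dmat d0 α1 α2 dp dr φ u - Dmat d0 α1 α2 dp dr φ v =
      φ • ((α1 * (gfun dp dr ‖u‖ - gfun dp dr ‖v‖)) •
          ContinuousLinearMap.id ℝ (EuclideanSpace ℝ (Fin d)) +
        (α2 - α1) • (kfun dp dr ‖u‖ • outerProd u - kfun dp dr ‖v‖ • outerProd v)) := by
    rw [Dmat_eq, Dmat_eq]
    module
  have h1 : ‖(α1 * (gfun dp dr ‖u‖ - gfun dp dr ‖v‖)) •
      ContinuousLinearMap.id ℝ (EuclideanSpace ℝ (Fin d))‖ ≤ α1 * ‖u - v‖ := by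
    rw [norm_smul, norm_mul, Real.norm_of_nonneg hα1.le, Real.norm_eq_abs]
    calc _ ≤ α1 * |gfun dp dr ‖u‖ - gfun dp dr ‖v‖| * 1 := by
          gcongr; exact ContinuousLinearMap.norm_id_le
      _ ≤ α1 * ‖u - v‖ := by
          rw [mul_one]
          gcongr
          exact (abs_gfun_sub_le hdp hdr (norm_nonneg u) (norm_nonneg v)).trans
            (abs_norm_sub_norm_le u v)
  have h2 : ‖(α2 - α1) • (kfun dp dr ‖u‖ • outerProd u - kfun dp dr ‖v‖ • outerProd v)‖ ≤
      |α2 - α1| * (3 * ‖u - v‖) := by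
    rw [norm_smul, Real.norm_eq_abs]
    gcongr
    exact norm_kfun_smul_outerProd_sub_le hdp hdr u v
  rw [e, norm_smul, Real.norm_of_nonneg hφ.le]
  calc _ ≤ φ * (α1 * ‖u - v‖ + |α2 - α1| * (3 * ‖u - v‖)) := by
        gcongr; exact (norm_add_le _ _).trans (add_le_add h1 h2)
    _ = φ * (α1 + 3 * |α2 - α1|) * ‖u - v‖ := by ring
    _ ≤ Φ0 * (α1 + 3 * |α2 - α1|) * ‖u - v‖ := by gcongr
end
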